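/- arXiv:1505.06146 — 5 statements merged into one kernel-verified Lean document; each statement's English description precedes it below -/
import Mathlib

section
/- Let k ≥ 2 and let w_0,…,w_k be real numbers. For t ∈ {1,…,k−1} and s ∈ {0,1} define Z_{s,t} = Σ_{ℓ=0}^{k−1−t} C(k−1−t, ℓ) (w_{ℓ+s} + w_{ℓ+s+t}), and define Z_{0,k} = w_0 and Z_{1,k} = w_k. Then Z_{0,t} = Z_{1,t} holds for every t ∈ {1,…,k} if and only if w_ℓ = w_{k−ℓ} for all ℓ ∈ {0,…,k}. -/
/-!
Reversing the order of summation in the second half of each `Z_{s,t}` turns `Z_{0,t} - Z_{1,t}`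
into a binomial combination of the increments `d ℓ - d (ℓ + 1)` of the defect
`d ℓ = w ℓ - w (k - ℓ)`. For `t = k - 1, k - 2, …, 1` these equations form a triangular system with
unit diagonal, so they say exactly that `d` is constant on `{0, …, k - 1}`; the equation `w 0 = w k`
says that `d` starts at zero, and the last value follows from `d k = -d 0`.
-/

theorem forall_lt_sum_smul_eq_zero_iff {R M : Type*} [Semiring R] [AddCommMonoid M] [Module R M]
    {c : ℕ → ℕ → R} (hc : ∀ m, IsUnit (c m m)) (f : ℕ → M) (n : ℕ) :
    (∀ m < n, ∑ ℓ ∈ Finset.range (m + 1), c m ℓ • f ℓ = 0) ↔ ∀ m < n, f m = 0 := by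
  constructor
  · intro hsum m
    induction m using Nat.strong_induction_on with
    | _ m ih =>
      intro hm
      have lower_terms : ∑ ℓ ∈ Finset.range m, c m ℓ • f ℓ = 0 :=
        Finset.sum_eq_zero fun ℓ hℓ => by
          have hℓm := Finset.mem_range.1 hℓ
          rw [ih ℓ hℓm (hℓm.trans hm), smul_zero]
      have diagonal_term : c m m • f m = 0 := by
        simpa only [Finset.sum_range_succ, lower_terms, zero_add] using hsum m hm
      exact (hc m).smul_eq_zero.1 diagonal_term
  · intro hf m hm
    refine Finset.sum_eq_zero fun ℓ hℓ => ?_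
    rw [hf ℓ ((Finset.mem_range_succ_iff.1 hℓ).trans_lt hm), smul_zero]

theorem sum_range_choose_nsmul_reflect {M : Type*} [AddCommMonoid M] (f : ℕ → M) (n : ℕ) :
    ∑ ℓ ∈ Finset.range (n + 1), n.choose ℓ • f (n - ℓ)
      = ∑ ℓ ∈ Finset.range (n + 1), n.choose ℓ • f ℓ := by
  rw [← Finset.sum_flip fun ℓ => n.choose ℓ • f ℓ]
  refine Finset.sum_congr rfl fun ℓ hℓ => ?_
  rw [Nat.choose_symm (Finset.mem_range_succ_iff.1 hℓ)]

section LinearSystem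

variable {A : Type*} [AddCommGroup A]

/-- The quantity `Z_{s,t}` of the linear system, for `t < k`. The coefficients act by natural-number
scalar multiplication, so that the `w ℓ` may lie in any abelian group. -/
def binomialPairSum (k : ℕ) (w : ℕ → A) (s t : ℕ) : A :=
  ∑ ℓ ∈ Finset.range (k - t), (k - 1 - t).choose ℓ • (w (ℓ + s) + w (ℓ + s + t))

/-- The failure of `w` to be self-dual at `ℓ`. It measures the reflection `ℓ ↦ k - ℓ` only for
`ℓ ≤ k`, because the subtraction of indices is truncated. -/
def selfdualDefect (k : ℕ) (w : ℕ → A) (ℓ : ℕ) : A :=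
  w ℓ - w (k - ℓ)

theorem selfdualDefect_eq_zero {k : ℕ} {w : ℕ → A} {ℓ : ℕ} :
    selfdualDefect k w ℓ = 0 ↔ w ℓ = w (k - ℓ) :=
  sub_eq_zero

theorem selfdualDefect_reflect {k ℓ : ℕ} (w : ℕ → A) (hℓ : ℓ ≤ k) :
    selfdualDefect k w (k - ℓ) = -selfdualDefect k w ℓ := by
  rw [selfdualDefect, selfdualDefect, Nat.sub_sub_self hℓ, neg_sub]

theorem binomialPairSum_eq_sum_reflect {k m t : ℕ} (hk : m + t + 1 = k) (w : ℕ → A) (s : ℕ) :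
    binomialPairSum k w s t
      = ∑ ℓ ∈ Finset.range (m + 1), m.choose ℓ • (w (ℓ + s) + w (m - ℓ + s + t)) := by
  have hrange : k - t = m + 1 := by omega
  have hchoose : k - 1 - t = m := by omega
  simp only [binomialPairSum, hrange, hchoose, smul_add, Finset.sum_add_distrib]
  rw [sum_range_choose_nsmul_reflect fun ℓ => w (ℓ + s + t)]

theorem binomialPairSum_zero_sub_one {k m t : ℕ} (hk : m + t + 1 = k) (w : ℕ → A) :
    binomialPairSum k w 0 t - binomialPairSum k w 1 t
      = ∑ ℓ ∈ Finset.range (m + 1),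
          m.choose ℓ • (selfdualDefect k w ℓ - selfdualDefect k w (ℓ + 1)) := by
  rw [binomialPairSum_eq_sum_reflect hk, binomialPairSum_eq_sum_reflect hk,
    ← Finset.sum_sub_distrib]
  refine Finset.sum_congr rfl fun ℓ hℓ => ?_
  have hℓm : ℓ ≤ m := Finset.mem_range_succ_iff.1 hℓ
  have hzero : m - ℓ + 0 + t = k - (ℓ + 1) := by omega
  have hone : m - ℓ + 1 + t = k - ℓ := by omega
  rw [← smul_sub, hzero, hone, add_zero, selfdualDefect, selfdualDefect]
  congr 1
  abel

theorem forall_binomialPairSum_eq_iff (k : ℕ) (w : ℕ → A) :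
    (∀ t, 1 ≤ t → t ≤ k - 1 → binomialPairSum k w 0 t = binomialPairSum k w 1 t)
      ↔ ∀ m < k - 1, selfdualDefect k w m = selfdualDefect k w (m + 1) := by
  have triangular := forall_lt_sum_smul_eq_zero_iff (c := Nat.choose) (fun m => by simp)
    (fun ℓ => selfdualDefect k w ℓ - selfdualDefect k w (ℓ + 1)) (k - 1)
  simp only [sub_eq_zero] at triangular
  rw [← triangular]
  constructor
  · intro h m hm
    rw [← binomialPairSum_zero_sub_one (t := k - 1 - m) (by omega), sub_eq_zero]
    exact h _ (by omega) (by omega)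
  · intro h t ht htk
    rw [← sub_eq_zero, binomialPairSum_zero_sub_one (m := k - 1 - t) (by omega)]
    exact h _ (by omega)

theorem forall_eq_reflect_iff_selfdualDefect (k : ℕ) (w : ℕ → A) :
    (∀ ℓ ≤ k, w ℓ = w (k - ℓ))
      ↔ (∀ m < k - 1, selfdualDefect k w m = selfdualDefect k w (m + 1))
        ∧ selfdualDefect k w 0 = 0 := by
  simp only [← selfdualDefect_eq_zero]
  constructor
  · intro h
    exact ⟨fun m hm => by rw [h m (by omega), h (m + 1) (by omega)], h 0 k.zero_le⟩
  · rintro ⟨hconst, hzero⟩ ℓ hℓ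
    have below_last : ∀ m ≤ k - 1, selfdualDefect k w m = 0 := by
      intro m
      induction m with
      | zero => exact fun _ => hzero
      | succ m ih => exact fun hm => (hconst m hm).symm.trans (ih (Nat.le_of_succ_le hm))
    obtain rfl | hlt := hℓ.eq_or_lt
    · simpa only [Nat.sub_zero, hzero, neg_zero] using selfdualDefect_reflect w ℓ.zero_le
    · exact below_last ℓ (Nat.le_sub_one_of_lt hlt)

theorem linear_system_iff_selfdual_general (k : ℕ) (w : ℕ → A) :
    ((∀ t, 1 ≤ t → t ≤ k - 1 → binomialPairSum k w 0 t = binomialPairSum k w 1 t) ∧ w 0 = w k)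
      ↔ ∀ ℓ ≤ k, w ℓ = w (k - ℓ) := by
  rw [forall_eq_reflect_iff_selfdualDefect, forall_binomialPairSum_eq_iff, selfdualDefect_eq_zero,
    Nat.sub_zero]

end LinearSystem

/-- characterisation of the solutions of the linear system
`Z_{0,t} = Z_{1,t}` (`t = 1, …, k`), where for `t ∈ {1,…,k-1}` and `s ∈ {0,1}` we set
`Z_{s,t} = Σ_{ℓ=0}^{k-1-t} C(k-1-t, ℓ) (w_{ℓ+s} + w_{ℓ+s+t})`, and `Z_{0,k} = w_0`,
`Z_{1,k} = w_k`.  The solutions are exactly the tuples with `w_ℓ = w_{k-ℓ}` for all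
`ℓ ∈ {0,…,k}`. -/
theorem linear_system_iff_selfdual (k : ℕ) (hk : 2 ≤ k) (w : ℕ → ℝ) :
    ((∀ t, 1 ≤ t → t ≤ k - 1 →
        (∑ ℓ ∈ Finset.range (k - t), ((k - 1 - t).choose ℓ : ℝ) * (w ℓ + w (ℓ + t)))
          = ∑ ℓ ∈ Finset.range (k - t),
              ((k - 1 - t).choose ℓ : ℝ) * (w (ℓ + 1) + w (ℓ + 1 + t)))
      ∧ w 0 = w k)
    ↔ ∀ ℓ ≤ k, w ℓ = w (k - ℓ) := by
  simpa only [binomialPairSum, nsmul_eq_mul, add_zero] using linear_system_iff_selfdual_general k w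
end

section
/- Suppose 0 ≤ β₀ < 1. Then for all sufficiently large Δ, setting ε = 1/Δ, for all β, γ satisfying max{β₀−ε, 0} ≤ β < β₀+ε and 0 < γ < 1+ε, the 2-spin system with parameters β, γ and λ = 1 is antiferromagnetic (i.e. βγ < 1) and is in the non-uniqueness regime of the infinite Δ-regular tree; that is, the system of equations x = ((βy+1)/(y+γ))^{Δ−1}, y = ((βx+1)/(x+γ))^{Δ−1} has more than one solution (x,y) with x,y > 0. -/
/-!
For `d = Δ - 1`, the recursion `f x = ((β x + 1) / (x + γ)) ^ d` is antitone, so `f ∘ f` is monotone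
and a point `a` with `f (f a) ≤ a < f a` forces a two-cycle `p < f p`, `f (f p) = p`, with `p ≤ a`;
then `(p, f p)` and `(f p, p)` are two different solutions. The test point is `a = 1 / d`.
Its image is at least `exp (d (1 - γ) - 1)`, hence at least both `exp (-2)` and `d (1 - γ)`. At such
a point, for large `d`, the base of the power is at most `exp (-η)`, with `η > 0` depending only on
the distance of `β` from `1`, so that `f (f a)` decays exponentially in `d` and falls below `1 / d`.
-/

open Filter Set Topology

/-- The tree recursion of the 2-spin system with parameters `β`, `γ` and no external field, at a
vertex with `d` children; on the infinite `Δ`-regular tree `d = Δ - 1`. -/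
noncomputable def treeRecursion (β γ : ℝ) (d : ℕ) (x : ℝ) : ℝ :=
  ((β * x + 1) / (x + γ)) ^ d

theorem exists_two_cycle_of_antitoneOn {α : Type*} [ConditionallyCompleteLinearOrder α]
    [TopologicalSpace α] [OrderTopology α] [DenselyOrdered α] {f : α → α} {m a : α}
    (hcont : ContinuousOn f (Ici m)) (hanti : AntitoneOn f (Icc m a))
    (hmaps : MapsTo f (Ici m) (Ici m)) (hma : m ≤ a) (ha : a < f a) (hffa : f (f a) ≤ a) :
    ∃ p ∈ Icc m a, p < f p ∧ f (f p) = p := by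
  have hcont₂ : ContinuousOn (f ∘ f) (Icc m a) :=
    (hcont.comp hcont hmaps).mono Icc_subset_Ici_self
  obtain ⟨p, hp, hfix⟩ := exists_mem_Icc_isFixedPt hcont₂ hma (hmaps (hmaps self_mem_Ici)) hffa
  exact ⟨p, hp, hp.2.trans_lt (ha.trans_le (hanti hp (right_mem_Icc.2 hma) hp.2)), hfix⟩

section TreeRecursion

variable {β γ x : ℝ} {d : ℕ}

theorem treeRecursion_pos (hβ : 0 ≤ β) (hγ : 0 < γ) (hx : 0 ≤ x) : 0 < treeRecursion β γ d x := by
  unfold treeRecursion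
  positivity

theorem continuousOn_treeRecursion (hγ : 0 < γ) : ContinuousOn (treeRecursion β γ d) (Ici 0) := by
  have hden : ∀ x ∈ Ici (0 : ℝ), x + γ ≠ 0 := fun x hx => (add_pos_of_nonneg_of_pos hx hγ).ne'
  unfold treeRecursion
  fun_prop (disch := assumption)

theorem antitoneOn_treeRecursion (hβ : 0 ≤ β) (hγ : 0 < γ) (hβγ : β * γ ≤ 1) :
    AntitoneOn (treeRecursion β γ d) (Ici 0) := by
  intro x (hx : 0 ≤ x) y (hy : 0 ≤ y) hxy
  refine pow_le_pow_left₀ (by positivity) ?_ d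
  rw [div_le_div_iff₀ (by positivity) (by positivity)]
  linear_combination mul_nonneg (sub_nonneg.2 hβγ) (sub_nonneg.2 hxy)

theorem exp_le_treeRecursion (hβ : 0 ≤ β) (hγ : 0 < γ) (hx : 0 ≤ x) :
    Real.exp (d * (1 - γ - x)) ≤ treeRecursion β γ d x := by
  rw [Real.exp_nat_mul]
  refine pow_le_pow_left₀ (Real.exp_nonneg _) ?_ d
  have hden : x + γ ≤ Real.exp (-(1 - γ - x)) := by
    linarith [Real.add_one_le_exp (-(1 - γ - x))]
  calc Real.exp (1 - γ - x) = 1 / Real.exp (-(1 - γ - x)) := by rw [Real.exp_neg, one_div, inv_inv]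
    _ ≤ 1 / (x + γ) := one_div_le_one_div_of_le (by positivity) hden
    _ ≤ (β * x + 1) / (x + γ) := by gcongr; linarith [mul_nonneg hβ hx]

theorem treeRecursion_le_exp (hβ : 0 ≤ β) (hγ : 0 < γ) (hx : 0 ≤ x) :
    treeRecursion β γ d x ≤ Real.exp (-(((1 - β) * x - (1 - γ)) / (x + γ))) ^ d := by
  refine pow_le_pow_left₀ (by positivity) ?_ d
  calc (β * x + 1) / (x + γ) = -(((1 - β) * x - (1 - γ)) / (x + γ)) + 1 := by
        field_simp
        ring
    _ ≤ Real.exp (-(((1 - β) * x - (1 - γ)) / (x + γ))) := Real.add_one_le_exp _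

theorem treeRecursion_le_exp_of_le {δ c : ℝ} (hβ : 0 ≤ β) (hβδ : β ≤ 1 - δ) (hδ : 0 ≤ δ)
    (hγ : 0 < γ) (hγ₂ : γ ≤ 2) (hc : 0 ≤ c) (hcx : c ≤ x) (hγx : 1 - γ ≤ δ / 2 * x) :
    treeRecursion β γ d x ≤ Real.exp (-(δ / 2 * (c / (c + 2)))) ^ d := by
  have hx : 0 ≤ x := hc.trans hcx
  have hratio : c / (c + 2) ≤ x / (x + γ) := by
    rw [div_le_div_iff₀ (by positivity) (by positivity)]
    linarith [mul_le_mul hcx hγ₂ hγ.le hx]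
  have hrate : δ / 2 * (c / (c + 2)) ≤ ((1 - β) * x - (1 - γ)) / (x + γ) :=
    calc δ / 2 * (c / (c + 2)) ≤ δ / 2 * (x / (x + γ)) := by gcongr
      _ = δ / 2 * x / (x + γ) := (mul_div_assoc _ _ _).symm
      _ ≤ ((1 - β) * x - (1 - γ)) / (x + γ) := by
        gcongr
        linarith [mul_le_mul_of_nonneg_right hβδ hx]
  refine (treeRecursion_le_exp hβ hγ hx).trans ?_
  gcongr

end TreeRecursion

theorem mul_lt_one_of_le_one_sub_of_le_one_add {β γ δ : ℝ} (hδ : 0 < δ) (hβ : 0 ≤ β)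
    (hβδ : β ≤ 1 - δ) (hγδ : γ ≤ 1 + δ) : β * γ < 1 :=
  calc β * γ ≤ β * (1 + δ) := by gcongr
    _ ≤ (1 - δ) * (1 + δ) := by gcongr
    _ < 1 := by linarith [mul_pos hδ hδ]

theorem exists_treeRecursion_two_cycle {β γ δ : ℝ} {d : ℕ} (hd : 0 < d) (hβ : 0 ≤ β)
    (hβδ : β ≤ 1 - δ) (hγ : 0 < γ) (hγd : γ ≤ 1 + 1 / (d : ℝ)) (hδd : 1 / (d : ℝ) ≤ δ / 2)
    (hexp : 1 / (d : ℝ) < Real.exp (-2))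
    (hdecay : Real.exp (-(δ / 2 * (Real.exp (-2) / (Real.exp (-2) + 2)))) ^ d ≤ 1 / (d : ℝ)) :
    ∃ p, 0 < p ∧ p < treeRecursion β γ d p ∧
      treeRecursion β γ d (treeRecursion β γ d p) = p := by
  set f := treeRecursion β γ d
  have hd' : (0 : ℝ) < d := Nat.cast_pos.2 hd
  have ha : (0 : ℝ) < 1 / d := one_div_pos.2 hd'
  have hda : (d : ℝ) * (1 / d) = 1 := mul_one_div_cancel hd'.ne'
  have hδ : 0 < δ := by linarith
  have hβγ : β * γ < 1 := mul_lt_one_of_le_one_sub_of_le_one_add hδ hβ hβδ (by linarith)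
  have hpos : ∀ x, 0 ≤ x → 0 < f x := fun x hx => treeRecursion_pos hβ hγ hx
  have hfa : Real.exp (d * (1 - γ) - 1) ≤ f (1 / d) := by
    simpa only [mul_sub, hda] using exp_le_treeRecursion (d := d) hβ hγ ha.le
  have hfa_const : Real.exp (-2) ≤ f (1 / d) := by
    refine (Real.exp_le_exp.2 ?_).trans hfa
    linarith [mul_le_mul_of_nonneg_left hγd hd'.le]
  have hfa_linear : d * (1 - γ) ≤ f (1 / d) := by
    linarith [Real.add_one_le_exp (d * (1 - γ) - 1)]
  have hγf : 1 - γ ≤ δ / 2 * f (1 / d) :=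
    calc 1 - γ = 1 / d * (d * (1 - γ)) := by field_simp
      _ ≤ 1 / d * f (1 / d) := by gcongr
      _ ≤ δ / 2 * f (1 / d) := mul_le_mul_of_nonneg_right hδd (hpos _ ha.le).le
  have hffa : f (f (1 / d)) ≤ 1 / d :=
    (treeRecursion_le_exp_of_le hβ hβδ hδ.le hγ (by linarith) (Real.exp_nonneg _)
      hfa_const hγf).trans hdecay
  obtain ⟨p, hp, hlt, hfix⟩ := exists_two_cycle_of_antitoneOn (continuousOn_treeRecursion hγ)
    ((antitoneOn_treeRecursion hβ hγ hβγ.le).mono Icc_subset_Ici_self)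
    (fun x hx => (hpos x hx).le) ha.le (hexp.trans_le hfa_const) hffa
  exact ⟨p, hfix ▸ hpos _ (hpos p hp.1).le, hlt, hfix⟩

theorem eventually_exp_neg_pow_le_one_div {η : ℝ} (hη : 0 < η) :
    ∀ᶠ d : ℕ in atTop, Real.exp (-η) ^ d ≤ 1 / (d : ℝ) := by
  have hlim := tendsto_self_mul_const_pow_of_lt_one (Real.exp_nonneg (-η))
    (Real.exp_lt_one_iff.2 (neg_neg_of_pos hη))
  filter_upwards [hlim.eventually_le_const one_pos, eventually_gt_atTop 0] with d hle hd
  rwa [le_div_iff₀' (Nat.cast_pos.2 hd)]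

theorem eventually_exists_treeRecursion_two_cycle {δ : ℝ} (hδ : 0 < δ) :
    ∀ᶠ d : ℕ in atTop, ∀ β γ : ℝ, 0 ≤ β → β ≤ 1 - δ → 0 < γ → γ ≤ 1 + 1 / (d : ℝ) →
      ∃ p, 0 < p ∧ p < treeRecursion β γ d p ∧
        treeRecursion β γ d (treeRecursion β γ d p) = p := by
  have hlim : Tendsto (fun d : ℕ => 1 / (d : ℝ)) atTop (𝓝 0) := tendsto_one_div_atTop_nhds_zero_nat
  have hη : 0 < δ / 2 * (Real.exp (-2) / (Real.exp (-2) + 2)) := by positivity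
  filter_upwards [eventually_gt_atTop 0, hlim.eventually_le_const (half_pos hδ),
    hlim.eventually_lt_const (Real.exp_pos (-2)), eventually_exp_neg_pow_le_one_div hη]
    with d hd hδd hexp hdecay β γ hβ hβδ hγ hγd
  exact exists_treeRecursion_two_cycle hd hβ hβδ hγ hγd hδd hexp hdecay

theorem nonuniqueness_strip_general (β₀ : ℝ) (h1 : β₀ < 1) :
    ∃ Δ₀ : ℕ, ∀ Δ : ℕ, Δ₀ ≤ Δ →
      ∀ β γ : ℝ, 0 ≤ β → β < β₀ + 1 / (Δ : ℝ) →
        0 < γ → γ < 1 + 1 / (Δ : ℝ) →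
        β * γ < 1 ∧
        ∃ x y x' y' : ℝ, 0 < x ∧ 0 < y ∧ 0 < x' ∧ 0 < y' ∧
          x = ((β * y + 1) / (y + γ)) ^ (Δ - 1) ∧
          y = ((β * x + 1) / (x + γ)) ^ (Δ - 1) ∧
          x' = ((β * y' + 1) / (y' + γ)) ^ (Δ - 1) ∧
          y' = ((β * x' + 1) / (x' + γ)) ^ (Δ - 1) ∧
          (x, y) ≠ (x', y') := by
  have hδ : 0 < (1 - β₀) / 2 := by linarith
  have hlim : Tendsto (fun d : ℕ => 1 / (d : ℝ)) atTop (𝓝 0) := tendsto_one_div_atTop_nhds_zero_nat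
  refine eventually_atTop.1 ?_
  filter_upwards [hlim.eventually_le_const hδ, eventually_gt_atTop 1,
    (tendsto_sub_atTop_nat 1).eventually (eventually_exists_treeRecursion_two_cycle hδ)]
    with Δ hΔδ hΔ hcycle β γ hβ hβΔ hγ hγΔ
  have hβδ : β ≤ 1 - (1 - β₀) / 2 := by linarith
  have hpred : 1 / (Δ : ℝ) ≤ 1 / ((Δ - 1 : ℕ) : ℝ) :=
    one_div_le_one_div_of_le (Nat.cast_pos.2 (by lia)) (Nat.cast_le.2 (Nat.sub_le Δ 1))
  obtain ⟨p, hp, hlt, hfix⟩ := hcycle β γ hβ hβδ hγ (by linarith)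
  refine ⟨mul_lt_one_of_le_one_sub_of_le_one_add hδ hβ hβδ (by linarith), p, _, _, p,
    hp, hp.trans hlt, hp.trans hlt, hp, hfix.symm, rfl, rfl, hfix.symm, ?_⟩
  exact fun h => hlt.ne (congrArg Prod.fst h)

/-- Lemma 3.4: if `0 ≤ β₀ < 1` then, for all sufficiently large `Δ`,
with `ε = 1/Δ`, every pair `(β, γ)` with `max (β₀ - ε) 0 ≤ β < β₀ + ε` and
`0 < γ < 1 + ε` yields an antiferromagnetic 2-spin system (`βγ < 1`) with no external
field (`λ = 1`) that is in the non-uniqueness regime of the infinite `Δ`-regular tree,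
i.e. the tree recursion `x = ((βy+1)/(y+γ))^{Δ-1}`, `y = ((βx+1)/(x+γ))^{Δ-1}` has more
than one positive solution `(x, y)`. -/
theorem nonuniqueness_strip (β₀ : ℝ) (h0 : 0 ≤ β₀) (h1 : β₀ < 1) :
    ∃ Δ₀ : ℕ, ∀ Δ : ℕ, Δ₀ ≤ Δ →
      ∀ β γ : ℝ, max (β₀ - 1 / (Δ : ℝ)) 0 ≤ β → β < β₀ + 1 / (Δ : ℝ) →
        0 < γ → γ < 1 + 1 / (Δ : ℝ) →
        β * γ < 1 ∧
        ∃ x y x' y' : ℝ, 0 < x ∧ 0 < y ∧ 0 < x' ∧ 0 < y' ∧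
          x = ((β * y + 1) / (y + γ)) ^ (Δ - 1) ∧
          y = ((β * x + 1) / (x + γ)) ^ (Δ - 1) ∧
          x' = ((β * y' + 1) / (y' + γ)) ^ (Δ - 1) ∧
          y' = ((β * x' + 1) / (x' + γ)) ^ (Δ - 1) ∧
          (x, y) ≠ (x', y') := by
  obtain ⟨Δ₀, hΔ₀⟩ := nonuniqueness_strip_general β₀ h1
  exact ⟨Δ₀, fun Δ hΔ β γ hβ => hΔ₀ Δ hΔ β γ ((le_max_right _ _).trans hβ)⟩
end

section
/- Let β, γ > 0, λ > 0 and let Δ be a positive integer. Set β' = √(βγ) and λ' = λ(√β/√γ)^Δ. For positive reals x, y, set x' = (√β/√γ)x and y' = (√β/√γ)y. Then (x,y) satisfies the pair of equations x·(βy+1)/(y+γ) = λ·((βy+1)/(y+γ))^Δ and y·(βx+1)/(x+γ) = λ·((βx+1)/(x+γ))^Δ if and only if (x',y') satisfies x'·(β'y'+1)/(y'+β') = λ'·((β'y'+1)/(y'+β'))^Δ and y'·(β'x'+1)/(x'+β') = λ'·((β'x'+1)/(x'+β'))^Δ. In particular, the positive solutions of the first system are in one-to-one correspondence with the positive solutions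 of the second. -/
/-!
Rescaling `z ↦ r z` of the spin ratios carries the parameters `(β, γ, λ)` to
`(β / r, r γ, λ r ^ Δ)`: it divides each factor `(β z + 1) / (z + γ)` by `r`, and this cancels
against the rescaled variable on the left of each equation and against `r ^ Δ` on the right.
The new edge parameters coincide, i.e. the model is of Ising form, for `r = √β / √γ`, where both
equal `√(βγ)`.
-/

section Rescaling

variable {K : Type*} [Field K] {r : K}

/-- The factor `(β z + 1) / (z + γ)` that a child with spin ratio `z` contributes to its parent
in the tree recursion of the 2-spin model with edge parameters `β`, `γ`. -/
def edgeFactor (β γ z : K) : K :=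
  (β * z + 1) / (z + γ)

/-- The pair `(x, y)` solves the two-step fixed-point system `x = lam * f(y) ^ (Δ - 1)`,
`y = lam * f(x) ^ (Δ - 1)` of the `Δ`-regular tree, where `f = edgeFactor β γ`. Each equation is
multiplied through by its factor `f`, so that no truncated subtraction occurs. -/
def IsTreeFixedPoint (β γ lam : K) (Δ : ℕ) (x y : K) : Prop :=
  x * edgeFactor β γ y = lam * edgeFactor β γ y ^ Δ ∧
    y * edgeFactor β γ x = lam * edgeFactor β γ x ^ Δ

lemma edgeFactor_rescale (β γ z : K) (hr : r ≠ 0) :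
    edgeFactor (β / r) (r * γ) (r * z) = edgeFactor β γ z / r := by
  have numerator : β / r * (r * z) = β * z := by rw [← mul_assoc, div_mul_cancel₀ β hr]
  rw [edgeFactor, edgeFactor, numerator, ← mul_add, div_div, mul_comm r]

lemma rescaled_equation_iff (x f lam : K) (Δ : ℕ) (hr : r ≠ 0) :
    r * x * (f / r) = lam * r ^ Δ * (f / r) ^ Δ ↔ x * f = lam * f ^ Δ := by
  have left : r * x * (f / r) = x * f := by rw [mul_right_comm, mul_div_cancel₀ f hr, mul_comm]
  have right : lam * r ^ Δ * (f / r) ^ Δ = lam * f ^ Δ := by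
    rw [mul_assoc, ← mul_pow, mul_div_cancel₀ f hr]
  rw [left, right]

theorem tree_recursion_ising_correspondence_general (β γ lam : K) (Δ : ℕ) {x y : K}
    (hr : r ≠ 0) (_hx : x + γ ≠ 0) (_hy : y + γ ≠ 0) :
    IsTreeFixedPoint β γ lam Δ x y ↔
      IsTreeFixedPoint (β / r) (r * γ) (lam * r ^ Δ) Δ (r * x) (r * y) := by
  simp only [IsTreeFixedPoint, edgeFactor_rescale _ _ _ hr, rescaled_equation_iff _ _ _ _ hr]

end Rescaling

lemma div_sqrt_div_sqrt {β : ℝ} (hβ : 0 ≤ β) (γ : ℝ) : β / (√β / √γ) = √(β * γ) := by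
  rw [div_div_eq_mul_div, mul_div_right_comm, Real.div_sqrt, Real.sqrt_mul hβ]

lemma sqrt_div_sqrt_mul {β : ℝ} (hβ : 0 ≤ β) (γ : ℝ) : √β / √γ * γ = √(β * γ) := by
  rw [div_mul_eq_mul_div, mul_div_assoc, Real.div_sqrt, Real.sqrt_mul hβ]

/-- from the proof of Corollary 3.2: the change of variables
`β' = √(βγ)`, `λ' = λ(√β/√γ)^Δ`, `x' = (√β/√γ)x`, `y' = (√β/√γ)y` transforms the
tree fixed-point system for the 2-spin model with parameters `(β, γ, λ)` into the one
for the Ising-form model with parameters `(β', β', λ')`; since the map `x ↦ (√β/√γ)x`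
is a bijection of the positive reals, the positive solutions of the two systems are in
one-to-one correspondence. -/
theorem tree_recursion_ising_correspondence
    (β γ lam : ℝ) (hβ : 0 < β) (hγ : 0 < γ) (hlam : 0 < lam)
    (Δ : ℕ) (hΔ : 0 < Δ) (x y : ℝ) (hx : 0 < x) (hy : 0 < y) :
    (x * ((β * y + 1) / (y + γ)) = lam * ((β * y + 1) / (y + γ)) ^ Δ ∧
        y * ((β * x + 1) / (x + γ)) = lam * ((β * x + 1) / (x + γ)) ^ Δ)
      ↔
    ((Real.sqrt β / Real.sqrt γ) * x *
          ((Real.sqrt (β * γ) * ((Real.sqrt β / Real.sqrt γ) * y) + 1) /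
            ((Real.sqrt β / Real.sqrt γ) * y + Real.sqrt (β * γ)))
        = lam * (Real.sqrt β / Real.sqrt γ) ^ Δ *
          ((Real.sqrt (β * γ) * ((Real.sqrt β / Real.sqrt γ) * y) + 1) /
            ((Real.sqrt β / Real.sqrt γ) * y + Real.sqrt (β * γ))) ^ Δ ∧
      (Real.sqrt β / Real.sqrt γ) * y *
          ((Real.sqrt (β * γ) * ((Real.sqrt β / Real.sqrt γ) * x) + 1) /
            ((Real.sqrt β / Real.sqrt γ) * x + Real.sqrt (β * γ)))
        = lam * (Real.sqrt β / Real.sqrt γ) ^ Δ *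
          ((Real.sqrt (β * γ) * ((Real.sqrt β / Real.sqrt γ) * x) + 1) /
            ((Real.sqrt β / Real.sqrt γ) * x + Real.sqrt (β * γ))) ^ Δ) := by
  have hr : √β / √γ ≠ 0 := by positivity
  simpa only [IsTreeFixedPoint, edgeFactor, div_sqrt_div_sqrt hβ.le, sqrt_div_sqrt_mul hβ.le] using
    tree_recursion_ising_correspondence_general β γ lam Δ hr (add_pos hx hγ).ne' (add_pos hy hγ).ne'
end

section
/- Suppose k > 2. Let f be an arity-k symmetric Boolean function (values w_0,…,w_k ∈ {0,1}) that is self-dual and satisfies w_0 = 0, and suppose f is neither the constant-0 function nor the function 𝟙[x_1⊕⋯⊕x_k = 1]. Then none of the following six functions is a polymorphism of f: the unary constant-0 function g_0; the unary constant-1 function g_1; the binary function AND; the binary function OR; the ternary majority function Maj(a,b,c) = (a∧b)∨(a∧c)∨(b∧c); and the ternary minority function a⊕b⊕c. -/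
/-- The symmetric Boolean function of arity `k` determined by the values
`w 0, …, w k`: it returns `w ℓ` on inputs with exactly `ℓ` ones. -/
def symBoolFun (k : ℕ) (w : ℕ → Bool) : (Fin k → Bool) → Bool :=
  fun x => w (Finset.univ.filter (fun j => x j = true)).card

/-- `g : {0,1}^m → {0,1}` is a polymorphism of `f : {0,1}^k → {0,1}`: for all
`m`-tuples of satisfying assignments of `f`, applying `g` coordinate-wise yields a
satisfying assignment of `f`. -/
def IsPolymorphism {m k : ℕ} (g : (Fin m → Bool) → Bool) (f : (Fin k → Bool) → Bool) :
    Prop :=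
  ∀ x : Fin m → Fin k → Bool, (∀ i, f (x i) = true) →
    f (fun j => g (fun i => x i j)) = true

/-!
Identify an assignment with the set of its ones. A polymorphism becomes an operation on finite
sets under which the family of sets `s` with `w #s = true` is closed: intersection for
conjunction, union for disjunction, and so on. Over a common kernel `t`, the petals `insert p t`,
`insert q t`, … meet, or join, or have as majority, a set whose size differs from theirs by one
(to make majority grow, the petals are `t ∪ {p, q}`, `t ∪ {p, r}`, `t ∪ {q, r}`), so from a
satisfying weight strictly between `0` and `k` one reaches weight `0` or weight `k`. With
minority, two petals contribute their symmetric difference `{p, q}`, so toggling any two points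
preserves satisfaction; hence `w` depends only on parity.
-/

open Finset
open scoped symmDiff

lemma exists_disjoint_card_eq {α : Type*} [Fintype α] {m n : ℕ} (h : m + n ≤ Fintype.card α) :
    ∃ s t : Finset α, Disjoint s t ∧ #s = m ∧ #t = n := by
  classical
  obtain ⟨s, -, hs⟩ := exists_subset_card_eq (s := (univ : Finset α)) (n := m) (by
    rw [card_univ]
    omega)
  obtain ⟨t, hts, ht⟩ := exists_subset_card_eq (s := sᶜ) (n := n) (by
    rw [card_compl]
    omega)
  exact ⟨s, t, subset_compl_iff_disjoint_left.mp hts, hs, ht⟩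

lemma apply_eq_apply_mod_of_le {α : Type*} {w : ℕ → α} {k n : ℕ}
    (h : ∀ l, l + n ≤ k → w (l + n) = w l) {l : ℕ} (hl : l ≤ k) : w l = w (l % n) := by
  have apply_add_mul : ∀ q r, r + n * q ≤ k → w (r + n * q) = w r := by
    intro q r
    induction q with
    | zero => simp
    | succ q ih =>
      intro hq
      rw [Nat.mul_succ, ← Nat.add_assoc] at hq ⊢
      rw [h _ hq, ih (by omega)]
  conv_lhs => rw [← Nat.mod_add_div l n]
  exact apply_add_mul _ _ ((Nat.mod_add_div l n).trans_le hl)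

lemma symBoolFun_decide_mem {k : ℕ} (w : ℕ → Bool) (s : Finset (Fin k)) :
    symBoolFun k w (fun j => decide (j ∈ s)) = w #s := by
  simp [symBoolFun]

namespace IsPolymorphism

variable {k : ℕ} {w : ℕ → Bool}

lemma apply_card {m : ℕ} {g : (Fin m → Bool) → Bool} (hg : IsPolymorphism g (symBoolFun k w))
    (s : Fin m → Finset (Fin k)) (hs : ∀ i, w #(s i) = true) :
    w #{j | g (fun i => decide (j ∈ s i)) = true} = true :=
  hg (fun i j => decide (j ∈ s i)) fun i => by rw [symBoolFun_decide_mem, hs i]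

lemma apply_card_const {c : Bool}
    (hg : IsPolymorphism (fun _ : Fin 1 → Bool => c) (symBoolFun k w))
    {l : ℕ} (hl : l ≤ k) (hw : w l = true) : w #{_j : Fin k | c = true} = true := by
  obtain ⟨s, -, hs⟩ := exists_subset_card_eq (s := (univ : Finset (Fin k))) (n := l) (by simpa)
  exact hg.apply_card (fun _ => s) fun _ => by rwa [hs]

lemma apply_zero_of_const_false
    (hg : IsPolymorphism (fun _ : Fin 1 → Bool => false) (symBoolFun k w))
    {l : ℕ} (hl : l ≤ k) (hw : w l = true) : w 0 = true := by
  simpa using hg.apply_card_const hl hw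

lemma apply_arity_of_const_true
    (hg : IsPolymorphism (fun _ : Fin 1 → Bool => true) (symBoolFun k w))
    {l : ℕ} (hl : l ≤ k) (hw : w l = true) : w k = true := by
  simpa using hg.apply_card_const hl hw

lemma apply_card_inter
    (hg : IsPolymorphism (fun x : Fin 2 → Bool => x 0 && x 1) (symBoolFun k w))
    {s t : Finset (Fin k)} (hs : w #s = true) (ht : w #t = true) : w #(s ∩ t) = true := by
  convert hg.apply_card ![s, t] (by simp [Fin.forall_fin_two, hs, ht]) using 3
  ext j
  simp only [mem_inter, mem_filter, mem_univ, true_and, Bool.and_eq_true, decide_eq_true_eq]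
  rfl

lemma apply_of_apply_succ_of_and
    (hg : IsPolymorphism (fun x : Fin 2 → Bool => x 0 && x 1) (symBoolFun k w))
    {l : ℕ} (hl : l + 2 ≤ k) (hw : w (l + 1) = true) : w l = true := by
  obtain ⟨t, d, htd, rfl, hd⟩ := exists_disjoint_card_eq (α := Fin k) (by rwa [Fintype.card_fin])
  obtain ⟨p, q, hpq, rfl⟩ := card_eq_two.mp hd
  have inter_petals : insert p t ∩ insert q t = t := by grind
  rw [← inter_petals]
  apply hg.apply_card_inter <;> rwa [card_insert_of_notMem (by grind)]

lemma apply_of_le_of_and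
    (hg : IsPolymorphism (fun x : Fin 2 → Bool => x 0 && x 1) (symBoolFun k w))
    {l m : ℕ} (hml : m ≤ l) (hl : l < k) (hw : w l = true) : w m = true := by
  induction hml using Nat.decreasingInduction with
  | self => exact hw
  | of_succ n hn ih => exact hg.apply_of_apply_succ_of_and (by omega) ih

lemma apply_card_union
    (hg : IsPolymorphism (fun x : Fin 2 → Bool => x 0 || x 1) (symBoolFun k w))
    {s t : Finset (Fin k)} (hs : w #s = true) (ht : w #t = true) : w #(s ∪ t) = true := by
  convert hg.apply_card ![s, t] (by simp [Fin.forall_fin_two, hs, ht]) using 3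
  ext j
  simp only [mem_union, mem_filter, mem_univ, true_and, Bool.or_eq_true, decide_eq_true_eq]
  rfl

lemma apply_succ_of_apply_of_or
    (hg : IsPolymorphism (fun x : Fin 2 → Bool => x 0 || x 1) (symBoolFun k w))
    {l : ℕ} (hl₀ : 0 < l) (hl : l + 1 ≤ k) (hw : w l = true) : w (l + 1) = true := by
  obtain ⟨c, rfl⟩ := Nat.exists_eq_add_one.mpr hl₀
  obtain ⟨t, d, htd, rfl, hd⟩ := exists_disjoint_card_eq (α := Fin k) (m := c) (n := 2)
    (by rwa [Fintype.card_fin])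
  obtain ⟨p, q, -, rfl⟩ := card_eq_two.mp hd
  have union_petals : insert p t ∪ insert q t = t ∪ {p, q} := by grind
  have card_union_pair : #(t ∪ {p, q}) = #t + 1 + 1 := by rw [card_union_of_disjoint htd, hd]
  rw [← card_union_pair, ← union_petals]
  apply hg.apply_card_union <;> rwa [card_insert_of_notMem (by grind)]

lemma apply_of_le_of_or
    (hg : IsPolymorphism (fun x : Fin 2 → Bool => x 0 || x 1) (symBoolFun k w))
    {l m : ℕ} (hl : 0 < l) (hlm : l ≤ m) (hm : m ≤ k) (hw : w l = true) : w m = true := by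
  induction m, hlm using Nat.le_induction with
  | base => exact hw
  | succ n hn ih => exact hg.apply_succ_of_apply_of_or (by omega) hm (ih (by omega))

lemma apply_card_majority
    (hg : IsPolymorphism (fun x : Fin 3 → Bool => (x 0 && x 1) || (x 0 && x 2) || (x 1 && x 2))
      (symBoolFun k w))
    {s t u : Finset (Fin k)} (hs : w #s = true) (ht : w #t = true) (hu : w #u = true) :
    w #(s ∩ t ∪ s ∩ u ∪ t ∩ u) = true := by
  convert hg.apply_card ![s, t, u] (by simp [Fin.forall_fin_succ, hs, ht, hu]) using 3
  ext j
  simp only [mem_union, mem_inter, mem_filter, mem_univ, true_and,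
    Bool.or_eq_true, Bool.and_eq_true, decide_eq_true_eq]
  rfl

lemma apply_of_apply_succ_of_majority
    (hg : IsPolymorphism (fun x : Fin 3 → Bool => (x 0 && x 1) || (x 0 && x 2) || (x 1 && x 2))
      (symBoolFun k w))
    {l : ℕ} (hl : l + 3 ≤ k) (hw : w (l + 1) = true) : w l = true := by
  obtain ⟨t, d, htd, rfl, hd⟩ := exists_disjoint_card_eq (α := Fin k) (by rwa [Fintype.card_fin])
  obtain ⟨p, q, r, hpq, hpr, hqr, rfl⟩ := card_eq_three.mp hd
  have majority_petals : insert p t ∩ insert q t ∪ insert p t ∩ insert r t ∪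
      insert q t ∩ insert r t = t := by grind
  rw [← majority_petals]
  apply hg.apply_card_majority <;> rwa [card_insert_of_notMem (by grind)]

lemma apply_succ_of_apply_of_majority
    (hg : IsPolymorphism (fun x : Fin 3 → Bool => (x 0 && x 1) || (x 0 && x 2) || (x 1 && x 2))
      (symBoolFun k w))
    {l : ℕ} (hl₂ : 2 ≤ l) (hl : l + 1 ≤ k) (hw : w l = true) : w (l + 1) = true := by
  obtain ⟨c, rfl⟩ := Nat.exists_eq_add_of_le' hl₂
  obtain ⟨t, d, htd, rfl, hd⟩ := exists_disjoint_card_eq (α := Fin k) (m := c) (n := 3)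
    (by rwa [Fintype.card_fin])
  obtain ⟨p, q, r, hpq, hpr, hqr, rfl⟩ := card_eq_three.mp hd
  have majority_copetals : (t ∪ {p, q}) ∩ (t ∪ {p, r}) ∪ (t ∪ {p, q}) ∩ (t ∪ {q, r}) ∪
      (t ∪ {p, r}) ∩ (t ∪ {q, r}) = t ∪ {p, q, r} := by grind
  have card_union_triple : #(t ∪ {p, q, r}) = #t + 2 + 1 := by
    rw [card_union_of_disjoint htd, hd]
  rw [← card_union_triple, ← majority_copetals]
  apply hg.apply_card_majority <;>
    rwa [card_union_of_disjoint (htd.mono_right (by grind)), card_pair ‹_›]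

lemma apply_zero_or_apply_arity_of_majority
    (hg : IsPolymorphism (fun x : Fin 3 → Bool => (x 0 && x 1) || (x 0 && x 2) || (x 1 && x 2))
      (symBoolFun k w))
    {l : ℕ} (hk : 2 < k) (hl : l ≤ k) (hw : w l = true) : w 0 = true ∨ w k = true := by
  obtain hl₂ | hl₂ := Nat.lt_or_ge l 2
  · left
    obtain rfl | rfl : l = 0 ∨ l = 1 := by omega
    · exact hw
    · exact hg.apply_of_apply_succ_of_majority hk hw
  · right
    induction hl using Nat.decreasingInduction with
    | self => exact hw
    | of_succ n hn ih =>
      exact ih (hg.apply_succ_of_apply_of_majority hl₂ hn hw) (by omega)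

lemma apply_card_symmDiff
    (hg : IsPolymorphism (fun x : Fin 3 → Bool => Bool.xor (x 0) (Bool.xor (x 1) (x 2)))
      (symBoolFun k w))
    {s t u : Finset (Fin k)} (hs : w #s = true) (ht : w #t = true) (hu : w #u = true) :
    w #(s ∆ (t ∆ u)) = true := by
  convert hg.apply_card ![s, t, u] (by simp [Fin.forall_fin_succ, hs, ht, hu]) using 3
  ext j
  simp only [mem_symmDiff, mem_filter, mem_univ, true_and]
  by_cases j ∈ s <;> by_cases j ∈ t <;> by_cases j ∈ u <;> simp_all

lemma apply_card_symmDiff_pair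
    (hg : IsPolymorphism (fun x : Fin 3 → Bool => Bool.xor (x 0) (Bool.xor (x 1) (x 2)))
      (symBoolFun k w))
    {l : ℕ} (hl₀ : 0 < l) (hlk : l < k) (hw : w l = true)
    {s : Finset (Fin k)} (hs : w #s = true) {p q : Fin k} (hpq : p ≠ q) :
    w #(s ∆ {p, q}) = true := by
  obtain ⟨t, ht, htl⟩ := exists_subset_card_eq (s := ({p, q}ᶜ : Finset (Fin k))) (n := l - 1) (by
    rw [card_compl, card_pair hpq, Fintype.card_fin]
    omega)
  have hp : p ∉ t := fun h => by simpa using ht h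
  have hq : q ∉ t := fun h => by simpa using ht h
  have symmDiff_petals : insert p t ∆ insert q t = {p, q} := by grind [mem_symmDiff]
  rw [← symmDiff_petals]
  apply hg.apply_card_symmDiff hs <;>
    rwa [card_insert_of_notMem ‹_›, htl, Nat.sub_add_cancel hl₀]

lemma apply_add_two_of_minority
    (hg : IsPolymorphism (fun x : Fin 3 → Bool => Bool.xor (x 0) (Bool.xor (x 1) (x 2)))
      (symBoolFun k w))
    {l : ℕ} (hl₀ : 0 < l) (hlk : l < k) (hw : w l = true) {m : ℕ} (hm : m + 2 ≤ k) :
    w (m + 2) = w m := by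
  obtain ⟨s, d, hsd, rfl, hd⟩ := exists_disjoint_card_eq (α := Fin k) (by rwa [Fintype.card_fin])
  obtain ⟨p, q, hpq, rfl⟩ := card_eq_two.mp hd
  rw [← hd, ← card_union_of_disjoint hsd, ← sup_eq_union, ← hsd.symmDiff_eq_sup,
    Bool.eq_iff_iff]
  refine ⟨fun h => ?_, fun h => hg.apply_card_symmDiff_pair hl₀ hlk hw h hpq⟩
  simpa using hg.apply_card_symmDiff_pair hl₀ hlk hw h hpq

lemma eq_parity_of_minority
    (hg : IsPolymorphism (fun x : Fin 3 → Bool => Bool.xor (x 0) (Bool.xor (x 1) (x 2)))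
      (symBoolFun k w))
    {l : ℕ} (h0 : w 0 = false) (hl : l < k) (hw : w l = true) {m : ℕ} (hm : m ≤ k) :
    w m = decide (m % 2 = 1) := by
  have hl₀ : 0 < l := Nat.pos_of_ne_zero fun h => by simp_all
  have apply_mod_two {n : ℕ} (hn : n ≤ k) : w n = w (n % 2) :=
    apply_eq_apply_mod_of_le (fun _ => hg.apply_add_two_of_minority hl₀ hl hw) hn
  have h1 : w 1 = true := by
    rw [apply_mod_two hl.le] at hw
    obtain h | h := Nat.mod_two_eq_zero_or_one l
    · simp [h, h0] at hw
    · rwa [h] at hw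
  rw [apply_mod_two hm]
  obtain h | h := Nat.mod_two_eq_zero_or_one m <;> simp [h, h0, h1]

end IsPolymorphism

theorem no_schaefer_polymorphism_general
    (k : ℕ) (w : ℕ → Bool) (h0 : w 0 = false) (hk0 : w k = false)
    (hnz : ¬ ∀ ℓ ≤ k, w ℓ = false)
    (hnodd : ¬ ∀ ℓ ≤ k, w ℓ = decide (ℓ % 2 = 1)) :
    ¬ IsPolymorphism (fun _ : Fin 1 → Bool => false) (symBoolFun k w) ∧
    ¬ IsPolymorphism (fun _ : Fin 1 → Bool => true) (symBoolFun k w) ∧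
    ¬ IsPolymorphism (fun x : Fin 2 → Bool => x 0 && x 1) (symBoolFun k w) ∧
    ¬ IsPolymorphism (fun x : Fin 2 → Bool => x 0 || x 1) (symBoolFun k w) ∧
    ¬ IsPolymorphism
        (fun x : Fin 3 → Bool => (x 0 && x 1) || (x 0 && x 2) || (x 1 && x 2))
        (symBoolFun k w) ∧
    ¬ IsPolymorphism (fun x : Fin 3 → Bool => Bool.xor (x 0) (Bool.xor (x 1) (x 2)))
        (symBoolFun k w) := by
  obtain ⟨a, hak, hwa⟩ : ∃ a ≤ k, w a = true := by simpa using hnz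
  have ha₀ : 0 < a := Nat.pos_of_ne_zero fun h => by simp_all
  have hak' : a < k := hak.lt_of_ne fun h => by simp_all
  have hk : 2 < k := by
    by_contra! hk
    obtain ⟨rfl, rfl⟩ : k = 2 ∧ a = 1 := by omega
    exact hnodd fun ℓ hℓ => by interval_cases ℓ <;> simp [h0, hk0, hwa]
  have hw0 : w 0 ≠ true := by simp [h0]
  have hwk : w k ≠ true := by simp [hk0]
  exact ⟨fun hg => hw0 (hg.apply_zero_of_const_false hak hwa),
    fun hg => hwk (hg.apply_arity_of_const_true hak hwa),
    fun hg => hw0 (hg.apply_of_le_of_and a.zero_le hak' hwa),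
    fun hg => hwk (hg.apply_of_le_of_or ha₀ hak le_rfl hwa),
    fun hg => (hg.apply_zero_or_apply_arity_of_majority hk hak hwa).elim hw0 hwk,
    fun hg => hnodd fun _ => hg.eq_parity_of_minority h0 hak' hwa⟩

/-- from the proof of Lemma 4.3: for `k > 2`, a self-dual symmetric
Boolean function `f` with `w 0 = 0` that is neither identically `0` nor the odd-parity
function has none of the six Schaefer polymorphisms: the constant-0 and constant-1 unary
functions, binary AND, binary OR, ternary majority, and ternary minority. -/
theorem no_schaefer_polymorphism
    (k : ℕ) (hk : 2 < k) (w : ℕ → Bool)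
    (hsd : ∀ ℓ ≤ k, w ℓ = w (k - ℓ)) (h0 : w 0 = false)
    (hnz : ¬ ∀ ℓ ≤ k, w ℓ = false)
    (hnodd : ¬ ∀ ℓ ≤ k, w ℓ = decide (ℓ % 2 = 1)) :
    ¬ IsPolymorphism (fun _ : Fin 1 → Bool => false) (symBoolFun k w) ∧
    ¬ IsPolymorphism (fun _ : Fin 1 → Bool => true) (symBoolFun k w) ∧
    ¬ IsPolymorphism (fun x : Fin 2 → Bool => x 0 && x 1) (symBoolFun k w) ∧
    ¬ IsPolymorphism (fun x : Fin 2 → Bool => x 0 || x 1) (symBoolFun k w) ∧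
    ¬ IsPolymorphism
        (fun x : Fin 3 → Bool => (x 0 && x 1) || (x 0 && x 2) || (x 1 && x 2))
        (symBoolFun k w) ∧
    ¬ IsPolymorphism (fun x : Fin 3 → Bool => Bool.xor (x 0) (Bool.xor (x 1) (x 2)))
        (symBoolFun k w) := by
  have hk0 : w k = false := by rw [hsd k le_rfl, Nat.sub_self, h0]
  exact no_schaefer_polymorphism_general k w h0 hk0 hnz hnodd
end

section
/- For all integers n ≥ i ≥ 2, it holds that (1 + C(n,i))·(1 + C(n,i−2)) ≤ C(n,i−1)², and equality holds if and only if n = 2 and i = 2. -/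
/-! Write `a, b, c` for three consecutive binomial coefficients `C(n,k), C(n,k+1), C(n,k+2)` and put
`p = k + 1`, `q = n - p`. The absorption identities `(q + 1) a = p b` and `(p + 1) c = q b` express
`(p + 1) (q + 1) (b² - (1 + c) (1 + a))` through `b`, `p`, `q` alone, as
`(p + q + 1) b (b - (p + q)) + 2 p q b - (p + 1) (q + 1)`. Since `b ≥ n = p + q`, this is at least
`2 p q (p + q) - (p + 1) (q + 1)`, which is positive unless `p = q = 1`. -/

theorem le_choose_of_pos_of_lt {n k : ℕ} (hk : 0 < k) (hkn : k < n) : n ≤ n.choose k := by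
  induction n generalizing k with
  | zero => omega
  | succ n ih =>
    obtain ⟨j, rfl⟩ := Nat.exists_eq_add_one.2 hk
    rcases j.eq_zero_or_pos with rfl | hj
    · simp
    · have hleft : n ≤ n.choose j := ih hj (by omega)
      have hright : 0 < n.choose (j + 1) := Nat.choose_pos (by omega)
      rw [Nat.choose_succ_succ']
      exact Nat.add_le_add hleft hright

section

variable {R : Type*} [CommRing R]

theorem mul_sq_sub_one_add_mul_one_add {a b c p q : R} (ha : b * p = a * (q + 1))
    (hc : c * (p + 1) = b * q) :
    (p + 1) * (q + 1) * (b ^ 2 - (1 + c) * (1 + a)) =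
      (p + q + 1) * b * (b - (p + q)) + (2 * (p * q) * b - (p + 1) * (q + 1)) := by
  linear_combination (p + 1) * (1 + c) * ha - (q + 1 + b * p) * hc

variable [LinearOrder R] [IsStrictOrderedRing R]

theorem add_one_mul_add_one_lt_two_mul_mul_add {p q : R} (hp : 1 ≤ p) (hq : 1 ≤ q)
    (hpq : 2 < p + q) : (p + 1) * (q + 1) < 2 * (p * q) * (p + q) :=
  calc
    (p + 1) * (q + 1) ≤ (2 * p) * (2 * q) := by gcongr <;> linarith
    _ = 2 * (p * q) * 2 := by ring
    _ < 2 * (p * q) * (p + q) := by gcongr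

theorem one_add_mul_one_add_lt_sq {a b c p q : R} (hp : 1 ≤ p) (hq : 1 ≤ q) (hpq : 2 < p + q)
    (hb : p + q ≤ b) (ha : b * p = a * (q + 1)) (hc : c * (p + 1) = b * q) :
    (1 + c) * (1 + a) < b ^ 2 := by
  have hmain : 0 ≤ (p + q + 1) * b * (b - (p + q)) :=
    mul_nonneg (mul_nonneg (by linarith) (by linarith)) (sub_nonneg.2 hb)
  have hrest : (p + 1) * (q + 1) < 2 * (p * q) * b :=
    (add_one_mul_add_one_lt_two_mul_mul_add hp hq hpq).trans_le (by gcongr)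
  have hdefect : 0 < (p + 1) * (q + 1) * (b ^ 2 - (1 + c) * (1 + a)) := by
    rw [mul_sq_sub_one_add_mul_one_add ha hc]
    exact add_pos_of_nonneg_of_pos hmain (sub_pos.2 hrest)
  exact sub_pos.1 (pos_of_mul_pos_right hdefect (by positivity))

end

theorem one_add_choose_mul_one_add_choose_lt_sq {n k : ℕ} (hn : 2 < n) (hk : k + 1 < n) :
    (1 + n.choose (k + 2)) * (1 + n.choose k) < n.choose (k + 1) ^ 2 := by
  obtain ⟨m, hm⟩ : ∃ m, n = k + 1 + (m + 1) := ⟨n - k - 2, by omega⟩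
  have ha : n.choose (k + 1) * (k + 1) = n.choose k * (m + 1 + 1) := by
    rw [Nat.choose_succ_right_eq, show n - k = m + 1 + 1 by omega]
  have hc : n.choose (k + 2) * (k + 1 + 1) = n.choose (k + 1) * (m + 1) := by
    rw [Nat.choose_succ_right_eq, show n - (k + 1) = m + 1 by omega]
  have hb : n ≤ n.choose (k + 1) := le_choose_of_pos_of_lt k.succ_pos hk
  zify at ha hb hc hn ⊢
  exact one_add_mul_one_add_lt_sq (by omega) (by omega) (by omega) (by omega) ha hc

/-- Lemma 4.9: for all `n ≥ i ≥ 2`,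
`(1 + C(n,i)) (1 + C(n,i-2)) ≤ C(n,i-1)²`, with equality iff `n = 2` and `i = 2`. -/
theorem binomial_strong_log_concavity (n i : ℕ) (h2 : 2 ≤ i) (hn : i ≤ n) :
    (1 + n.choose i) * (1 + n.choose (i - 2)) ≤ n.choose (i - 1) ^ 2 ∧
    ((1 + n.choose i) * (1 + n.choose (i - 2)) = n.choose (i - 1) ^ 2 ↔
      n = 2 ∧ i = 2) := by
  rcases (h2.trans hn).eq_or_lt with rfl | hn2
  · obtain rfl : i = 2 := hn.antisymm h2
    decide
  · obtain ⟨k, rfl⟩ := Nat.exists_eq_add_of_le' h2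
    have hlt : (1 + n.choose (k + 2)) * (1 + n.choose k) < n.choose (k + 1) ^ 2 :=
      one_add_choose_mul_one_add_choose_lt_sq hn2 (Nat.lt_of_succ_le hn)
    exact ⟨hlt.le, iff_of_false hlt.ne fun h => hn2.ne' h.1⟩
end
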